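/- Let N ≥ 1, let p > 1 and r be real numbers with 1 ≤ r ≤ p, and let A : ℝ^N → ℝ be strictly convex, positively p-homogeneous, and differentiable on ℝ^N; set a(ξ) = (1/p) • ∇A(ξ). Then for every s > 0 and all ξ₁, ξ₂ ∈ ℝ^N one has ⟨a(ξ₁), ξ₁ − r·s^(1−r) • ξ₂ + (r−1)·s^(−r) • ξ₁⟩ + ⟨a(ξ₂), ξ₂ − r·s^(r−1) • ξ₁ + (r−1)·s^r • ξ₂⟩ ≥ 0. (Pointwise form of the Diaz–Saa inequality.) -/

import Mathlib

open Real
open scoped RealInnerProductSpace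

/-!
The heart of the proof is a Picone-type bound for a subgradient `ℓ` of `A` at `x`,
`ℓ (x - (r * s ^ (1 - r)) • y + ((r - 1) * s ^ (-r)) • x)
  ≥ p * (A x - A x ^ (1 - r / p) * A y ^ (r / p))`.
Euler's identity gives `ℓ x = p * A x`; comparing `A` with its tangent at `t • y` and optimising
over `t > 0` gives `ℓ y ≤ p * A x ^ (1 - 1 / p) * A y ^ (1 / p)`; the weighted AM-GM inequality then
absorbs this product into the two remaining terms. Adding the bounds for `(ξ₁, ξ₂, s)` and
`(ξ₂, ξ₁, s⁻¹)`, what is left is nonnegative by AM-GM again.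
-/

section Scalar

variable {a b c p r s θ : ℝ}

lemma rpow_mul_rpow_add_rpow_mul_rpow_le_add (ha : 0 ≤ a) (hb : 0 ≤ b) (h₀ : 0 ≤ θ)
    (h₁ : θ ≤ 1) : a ^ (1 - θ) * b ^ θ + b ^ (1 - θ) * a ^ θ ≤ a + b := by
  have h₁' : 0 ≤ 1 - θ := sub_nonneg.2 h₁
  linarith [geom_mean_le_arith_mean2_weighted h₁' h₀ ha hb (sub_add_cancel 1 θ),
    geom_mean_le_arith_mean2_weighted h₁' h₀ hb ha (sub_add_cancel 1 θ)]

lemma mul_rpow_mul_rpow_le_add (ha : 0 ≤ a) (hb : 0 ≤ b) (hs : 0 < s) (hr : 1 ≤ r)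
    (hrp : r ≤ p) :
    r * s ^ (1 - r) * (a ^ (1 - 1 / p) * b ^ (1 / p)) ≤
      (r - 1) * s ^ (-r) * a + a ^ (1 - r / p) * b ^ (r / p) := by
  have hr₀ : 0 < r := one_pos.trans_le hr
  have hp₀ : 0 < p := hr₀.trans_le hrp
  have hw : 0 ≤ 1 - 1 / r := sub_nonneg.2 (div_le_one_of_le₀ hr hr₀.le)
  have hθ : 0 ≤ 1 - r / p := sub_nonneg.2 (div_le_one_of_le₀ hrp hp₀.le)
  have hs_pow : (s ^ (-r)) ^ (1 - 1 / r) = s ^ (1 - r) := by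
    rw [← rpow_mul hs.le]; congr 1; field_simp; ring
  have ha_pow : a ^ (1 - 1 / r) * (a ^ (1 - r / p)) ^ (1 / r) = a ^ (1 - 1 / p) := by
    rw [← rpow_mul ha, ← rpow_add_of_nonneg ha hw (by positivity)]; congr 1; field_simp; ring
  have hb_pow : (b ^ (r / p)) ^ (1 / r) = b ^ (1 / p) := by
    rw [← rpow_mul hb]; congr 1; field_simp
  calc r * s ^ (1 - r) * (a ^ (1 - 1 / p) * b ^ (1 / p))
      = r * ((s ^ (-r) * a) ^ (1 - 1 / r) *
          (a ^ (1 - r / p) * b ^ (r / p)) ^ (1 / r)) := by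
        rw [mul_rpow (by positivity) ha, mul_rpow (by positivity) (by positivity), hs_pow,
          hb_pow, ← ha_pow]
        ring
    _ ≤ r * ((1 - 1 / r) * (s ^ (-r) * a) + 1 / r * (a ^ (1 - r / p) * b ^ (r / p))) := by
        gcongr
        exact geom_mean_le_arith_mean2_weighted hw (by positivity) (by positivity) (by positivity)
          (sub_add_cancel 1 _)
    _ = (r - 1) * s ^ (-r) * a + a ^ (1 - r / p) * b ^ (r / p) := by
        field_simp

lemma le_mul_rpow_mul_rpow_of_pos (hp : 0 < p) (ha : 0 < a) (hb : 0 < b)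
    (h : ∀ t, 0 < t → t * c ≤ (p - 1) * a + t ^ p * b) :
    c ≤ p * (a ^ (1 - 1 / p) * b ^ (1 / p)) := by
  -- the minimiser over `t` of `((p - 1) * a + t ^ p * b) / t`
  set t := (a / b) ^ (1 / p) with ht_def
  have ht : 0 < t := by positivity
  have htp : t ^ p * b = a := by
    rw [ht_def, one_div, rpow_inv_rpow (by positivity) hp.ne', div_mul_cancel₀ _ hb.ne']
  have ht_mul : t * (a ^ (1 - 1 / p) * b ^ (1 / p)) = a := by
    rw [ht_def, div_rpow ha.le hb.le, rpow_sub ha, rpow_one]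
    field_simp
  refine le_of_mul_le_mul_left ?_ ht
  calc t * c ≤ (p - 1) * a + t ^ p * b := h t ht
    _ = p * a := by rw [htp]; ring
    _ = t * (p * (a ^ (1 - 1 / p) * b ^ (1 / p))) := by rw [mul_left_comm, ht_mul]

lemma le_mul_rpow_mul_rpow_of_nonneg (hp : 1 ≤ p) (ha : 0 ≤ a) (hb : 0 ≤ b)
    (h : ∀ t, 0 < t → t * c ≤ (p - 1) * a + t ^ p * b) :
    c ≤ p * (a ^ (1 - 1 / p) * b ^ (1 / p)) := by
  have hp₀ : 0 < p := one_pos.trans_le hp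
  have hp₁ : 0 ≤ 1 - 1 / p := sub_nonneg.2 (div_le_one_of_le₀ hp hp₀.le)
  have hcont : Continuous fun ε : ℝ ↦ p * ((a + ε) ^ (1 - 1 / p) * (b + ε) ^ (1 / p)) := by
    have : 0 ≤ 1 / p := by positivity
    fun_prop (disch := tauto)
  have hlim := (hcont.tendsto 0).mono_left (nhdsWithin_le_nhds (s := Set.Ioi 0))
  simp only [add_zero] at hlim
  refine ge_of_tendsto hlim ?_
  filter_upwards [self_mem_nhdsWithin] with ε (hε : 0 < ε)
  refine le_mul_rpow_mul_rpow_of_pos hp₀ (by positivity) (by positivity) fun t ht ↦ ?_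
  calc t * c ≤ (p - 1) * a + t ^ p * b := h t ht
    _ ≤ (p - 1) * (a + ε) + t ^ p * (b + ε) := by
      have : 0 ≤ p - 1 := sub_nonneg.2 hp
      gcongr <;> exact le_add_of_nonneg_right hε.le

end Scalar

section Subgradient

variable {E : Type*} [AddCommGroup E] [Module ℝ E] {A : E → ℝ} {ℓ ℓ₁ ℓ₂ : Module.Dual ℝ E}
  {p r s : ℝ} {x y : E}

/-- Positive `p`-homogeneity. The case `t = 0` is included, so that `A 0 = 0` whenever `p ≠ 0`. -/
def IsPosHomogeneous (p : ℝ) (A : E → ℝ) : Prop :=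
  ∀ t : ℝ, 0 ≤ t → ∀ x : E, A (t • x) = t ^ p * A x

/-- `ℓ` is a subgradient of `A` at `x`. The functional is purely algebraic: no continuity is
asked for, and `E` carries no topology. -/
def IsSubgradientAt (ℓ : Module.Dual ℝ E) (A : E → ℝ) (x : E) : Prop :=
  ∀ y, A x + ℓ (y - x) ≤ A y

lemma IsPosHomogeneous.map_zero (hA : IsPosHomogeneous p A) (hp : p ≠ 0) : A 0 = 0 := by
  simpa [zero_rpow hp] using hA 0 le_rfl 0

namespace IsSubgradientAt

lemma monotone (hx : IsSubgradientAt ℓ₁ A x) (hy : IsSubgradientAt ℓ₂ A y) :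
    0 ≤ ℓ₁ (x - y) + ℓ₂ (y - x) := by
  have hxy := hx y
  have hyx := hy x
  rw [← neg_sub, map_neg] at hxy hyx
  linarith

lemma apply_self (hℓ : IsSubgradientAt ℓ A x) (hA : IsPosHomogeneous p A) :
    ℓ x = p * A x := by
  have hmin : IsLocalMin (fun t : ℝ ↦ t ^ p * A x - t * ℓ x) 1 := by
    filter_upwards [lt_mem_nhds zero_lt_one] with t ht
    have h := hℓ (t • x)
    rw [hA t ht.le, map_sub, map_smul, smul_eq_mul] at h
    simp only [one_rpow, one_mul]
    linarith
  have hderiv : HasDerivAt (fun t : ℝ ↦ t ^ p * A x - t * ℓ x) (p * A x - ℓ x) 1 := by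
    simpa using ((hasDerivAt_rpow_const (p := p) (.inl one_ne_zero)).mul_const (A x)).fun_sub
      ((hasDerivAt_id' (1 : ℝ)).mul_const (ℓ x))
  exact (sub_eq_zero.1 (hmin.hasDerivAt_eq_zero hderiv)).symm

lemma nonneg (hℓ : IsSubgradientAt ℓ A x) (hA : IsPosHomogeneous p A) (hp : 1 < p) :
    0 ≤ A x := by
  have h := hℓ 0
  rw [zero_sub, map_neg, hℓ.apply_self hA, hA.map_zero (by positivity)] at h
  nlinarith

lemma apply_le (hℓ : IsSubgradientAt ℓ A x) (hA : IsPosHomogeneous p A) (hp : 1 ≤ p)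
    (hx : 0 ≤ A x) (hy : 0 ≤ A y) : ℓ y ≤ p * (A x ^ (1 - 1 / p) * A y ^ (1 / p)) := by
  refine le_mul_rpow_mul_rpow_of_nonneg hp hx hy fun t ht ↦ ?_
  have h := hℓ (t • y)
  rw [hA t ht.le, map_sub, map_smul, smul_eq_mul, hℓ.apply_self hA] at h
  linarith

lemma picone (hℓ : IsSubgradientAt ℓ A x) (hA : IsPosHomogeneous p A) (hr : 1 ≤ r)
    (hrp : r ≤ p) (hs : 0 < s) (hx : 0 ≤ A x) (hy : 0 ≤ A y) :
    p * (A x - A x ^ (1 - r / p) * A y ^ (r / p)) ≤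
      ℓ (x - (r * s ^ (1 - r)) • y + ((r - 1) * s ^ (-r)) • x) := by
  have hp : 1 ≤ p := hr.trans hrp
  have hcross : r * s ^ (1 - r) * ℓ y ≤
      p * ((r - 1) * s ^ (-r) * A x + A x ^ (1 - r / p) * A y ^ (r / p)) :=
    calc r * s ^ (1 - r) * ℓ y
        ≤ r * s ^ (1 - r) * (p * (A x ^ (1 - 1 / p) * A y ^ (1 / p))) := by
          gcongr
          exact hℓ.apply_le hA hp hx hy
      _ = p * (r * s ^ (1 - r) * (A x ^ (1 - 1 / p) * A y ^ (1 / p))) := by ring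
      _ ≤ _ := by
          gcongr
          exact mul_rpow_mul_rpow_le_add hx hy hs hr hrp
  rw [map_add, map_sub, map_smul, map_smul, smul_eq_mul, smul_eq_mul, hℓ.apply_self hA]
  linarith

end IsSubgradientAt

theorem diaz_saa_pointwise_general (hr : 1 ≤ r) (hrp : r ≤ p) (hs : 0 < s)
    (hA : IsPosHomogeneous p A) (hx : IsSubgradientAt ℓ₁ A x) (hy : IsSubgradientAt ℓ₂ A y) :
    0 ≤ ℓ₁ (x - (r * s ^ (1 - r)) • y + ((r - 1) * s ^ (-r)) • x)
      + ℓ₂ (y - (r * s ^ (r - 1)) • x + ((r - 1) * s ^ r) • y) := by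
  obtain rfl | hr₁ := hr.eq_or_lt
  · simpa using hx.monotone hy
  have hp : 1 < p := hr₁.trans_le hrp
  have hAx : 0 ≤ A x := hx.nonneg hA hp
  have hAy : 0 ≤ A y := hy.nonneg hA hp
  have hx_picone := hx.picone hA hr hrp hs hAx hAy
  have hy_picone := hy.picone hA hr hrp (inv_pos.2 hs) hAy hAx
  rw [← rpow_neg_eq_inv_rpow, ← rpow_neg_eq_inv_rpow, neg_sub, neg_neg] at hy_picone
  have hmix := rpow_mul_rpow_add_rpow_mul_rpow_le_add (θ := r / p) hAx hAy (by positivity)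
    (div_le_one_of_le₀ hrp (by positivity))
  have := mul_le_mul_of_nonneg_left hmix (by positivity : 0 ≤ p)
  linarith

end Subgradient

lemma isSubgradientAt_of_hasFDerivAt {E : Type*} [NormedAddCommGroup E] [NormedSpace ℝ E]
    {A : E → ℝ} {f : StrongDual ℝ E} {x : E} (hA : ConvexOn ℝ Set.univ A)
    (hf : HasFDerivAt A f x) : IsSubgradientAt (f : Module.Dual ℝ E) A x := by
  intro y
  have hderiv : HasDerivAt (A ∘ AffineMap.lineMap x y) (f (y - x)) (0 : ℝ) :=
    HasFDerivAt.comp_hasDerivAt 0 (by simpa using hf) AffineMap.hasDerivAt_lineMap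
  have hslope := (hA.comp_affineMap (AffineMap.lineMap x y)).le_slope_of_hasDerivAt
    (Set.mem_univ 0) (Set.mem_univ 1) one_pos hderiv
  simp only [slope_def_field, Function.comp_apply, AffineMap.lineMap_apply_one,
    AffineMap.lineMap_apply_zero, sub_zero, div_one] at hslope
  exact le_sub_iff_add_le'.1 hslope

lemma isSubgradientAt_gradient {E : Type*} [NormedAddCommGroup E] [InnerProductSpace ℝ E]
    [CompleteSpace E] {A : E → ℝ} {x : E} (hA : ConvexOn ℝ Set.univ A)
    (hx : DifferentiableAt ℝ A x) : IsSubgradientAt (innerₛₗ ℝ (gradient A x)) A x :=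
  isSubgradientAt_of_hasFDerivAt hA hx.hasGradientAt.hasFDerivAt

theorem diaz_saa_pointwise
    (N : ℕ) (hN : 1 ≤ N) (p r : ℝ) (hp : 1 < p) (hr : 1 ≤ r) (hrp : r ≤ p)
    (A : EuclideanSpace ℝ (Fin N) → ℝ)
    (hconv : StrictConvexOn ℝ Set.univ A)
    (hhom : ∀ t : ℝ, 0 ≤ t → ∀ ξ : EuclideanSpace ℝ (Fin N), A (t • ξ) = t ^ p * A ξ)
    (hdiff : Differentiable ℝ A)
    (s : ℝ) (hs : 0 < s) (ξ₁ ξ₂ : EuclideanSpace ℝ (Fin N)) :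
    ⟪(1/p) • gradient A ξ₁, ξ₁ - (r * s ^ (1 - r)) • ξ₂ + ((r - 1) * s ^ (-r)) • ξ₁⟫
      + ⟪(1/p) • gradient A ξ₂, ξ₂ - (r * s ^ (r - 1)) • ξ₁ + ((r - 1) * s ^ r) • ξ₂⟫
      ≥ 0 := by
  have hgrad ξ := isSubgradientAt_gradient hconv.convexOn (hdiff ξ)
  rw [real_inner_smul_left, real_inner_smul_left, ← mul_add]
  exact mul_nonneg (by positivity) (diaz_saa_pointwise_general hr hrp hs hhom (hgrad ξ₁) (hgrad ξ₂))
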